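/- For disjoint vertex sets $U,W$ of a graph $G$, let $E_G(U,W)$ be the set of edges with one endpoint in $U$ and the other in $W$, and for nonempty $U,W$ let $d(U,W) := |E_G(U,W)|/(|U||W|)$. For $\gamma,p\in(0,1]$, a graph $G$ on a finite vertex set $V$ is called $(\gamma,p)$-pseudorandom if $|d(U,W)-p|\le\gamma p$ for every pair of disjoint sets $U,W\subseteq V$ with $|U|,|W|\ge\gamma|V|$. Let $\gamma,p\in(0,1]$ and let $G=(V,E)$ be a $(\gamma,p)$-pseudorandom graph on $n\ge 1$ vertices. Then every set $U\subseteq V$ with $|U|\ge 2\lceil\gamma n\rceil$ (equivalently, $\lfloor |U|/2\rfloor\ge\gamma n$) satisfies $$\left|\frac{|E(U)|}{\binom{|U|}{2}}-p\right|\le\gamma p,$$ where $E(U)$ denotes the set of edges of $G$ with both endpoints in $U$. -/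

import Mathlib

/-- The number of edges of `G` with one endpoint in `U` and the other in `W`
(for disjoint `U`, `W`, each such edge corresponds to exactly one ordered pair). -/
noncomputable def edgesBetween {V : Type*} (G : SimpleGraph V) (U W : Set V) : ℕ :=
  {q : V × V | q.1 ∈ U ∧ q.2 ∈ W ∧ G.Adj q.1 q.2}.ncard

/-- A graph `G` on vertex set `V` is `(γ,p)`-pseudorandom if for every pair of
disjoint sets `U, W ⊆ V` with `|U|,|W| ≥ γ|V|` the density `d(U,W)` satisfies
`|d(U,W) − p| ≤ γp`. -/
def IsPseudorandom {V : Type*} [Fintype V] (G : SimpleGraph V) (γ p : ℝ) : Prop :=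
  ∀ U W : Set V, Disjoint U W →
    γ * (Fintype.card V : ℝ) ≤ (U.ncard : ℝ) → γ * (Fintype.card V : ℝ) ≤ (W.ncard : ℝ) →
    |(edgesBetween G U W : ℝ) / ((U.ncard : ℝ) * (W.ncard : ℝ)) - p| ≤ γ * p

/-!
The density of `G` inside `U` is the average, over all `A ⊆ U` of a fixed size `k` with
`0 < k < |U|`, of the density between `A` and `U \ A`: by symmetry every pair of distinct vertices
of `U` is separated by the same number of such `A`. Taking `k = ⌈γn⌉`, both `A` and `U \ A` have at
least `γn` vertices, so every density in the average is within `γp` of `p`, and hence so is the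
average.
-/

open Finset
open scoped BigOperators

theorem choose_add_two_mul (n k : ℕ) :
    (n + 2).choose (k + 1) * ((k + 1) * (n + 1 - k)) = (n + 2) * (n + 1) * n.choose k := by
  calc
    _ = (n + 2).choose (k + 1) * (k + 1) * (n + 1 - k) := (mul_assoc _ _ _).symm
    _ = (n + 2) * ((n + 1).choose k * (n + 1 - k)) := by
      rw [← Nat.add_one_mul_choose_eq, mul_assoc]
    _ = (n + 2) * (n + 1) * n.choose k := by
      rw [← Nat.choose_mul_succ_eq, mul_comm (n.choose k), mul_assoc]

theorem card_filter_powersetCard_mem_notMem {α : Type*} [DecidableEq α] {s : Finset α} {x y : α}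
    (hx : x ∈ s) (hy : y ∈ s) (hxy : x ≠ y) (k : ℕ) :
    #{A ∈ s.powersetCard (k + 1) | x ∈ A ∧ y ∉ A} = (#s - 2).choose k := by
  have hfilter : {A ∈ s.powersetCard (k + 1) | x ∈ A ∧ y ∉ A} =
      {A ∈ (s.erase y).powersetCard (k + 1) | {x} ⊆ A} := by
    ext A
    simp only [mem_filter, mem_powersetCard, singleton_subset_iff, subset_erase]
    tauto
  have hx' : {x} ⊆ s.erase y := singleton_subset_iff.2 (mem_erase.2 ⟨hxy, hx⟩)
  rw [hfilter, card_filter_powersetCard_subset _ _ _ hx' (by simp), card_erase_of_mem hy,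
    card_singleton, Nat.sub_sub, Nat.add_sub_cancel]

theorem abs_expect_sub_le {ι M : Type*} [AddCommGroup M] [LinearOrder M] [IsOrderedAddMonoid M]
    [Module ℚ≥0 M] [PosSMulMono ℚ≥0 M] {s : Finset ι} (hs : s.Nonempty) {f : ι → M} {a ε : M}
    (h : ∀ i ∈ s, |f i - a| ≤ ε) :
    |𝔼 i ∈ s, f i - a| ≤ ε := by
  rw [← expect_const hs a, ← expect_sub_distrib]
  exact (abs_expect_le _ _).trans (expect_le hs h)

section

variable {V : Type*} (G : SimpleGraph V) [DecidableRel G.Adj]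

theorem edgesBetween_coe (s t : Finset V) : edgesBetween G s t = #(G.interedges s t) := by
  rw [edgesBetween, ← Set.ncard_coe_finset]
  congr 1
  ext q
  simp [SimpleGraph.mem_interedges_iff]

theorem card_interedges_self (s : Finset V) :
    #(G.interedges s s) = 2 * {e ∈ G.edgeSet | ∀ v ∈ e, v ∈ s}.ncard := by
  have hpairs : G.interedges s s =
      (univ.filter fun (x, y) ↦ (G.induce (s : Set V)).Adj x y).map
        ((Function.Embedding.subtype _).prodMap (Function.Embedding.subtype _)) := by
    ext ⟨x, y⟩
    simp only [SimpleGraph.mem_interedges_iff, mem_map, mem_filter_univ, Prod.exists,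
      SimpleGraph.comap_adj, Function.Embedding.prodMap]
    aesop
  have hedges : {e ∈ G.edgeSet | ∀ v ∈ e, v ∈ s} =
      Sym2.map (↑) '' (G.induce (s : Set V)).edgeSet := by
    refine Set.ext (Sym2.ind fun x y ↦ ⟨?_, ?_⟩)
    · rintro ⟨hxy, hs⟩
      exact ⟨s(⟨x, hs x (Sym2.mem_mk_left x y)⟩, ⟨y, hs y (Sym2.mem_mk_right x y)⟩), hxy, rfl⟩
    · rintro ⟨⟨x', y'⟩, hadj, h⟩
      rw [← h]
      simpa using hadj
  rw [hpairs, card_map, hedges,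
    Set.ncard_image_of_injective _ (Sym2.map.injective Subtype.val_injective),
    ← SimpleGraph.coe_edgeFinset, Set.ncard_coe_finset, SimpleGraph.two_mul_card_edgeFinset]

theorem card_interedges_self_div (𝕜 : Type*) [Field 𝕜] [CharZero 𝕜] (s : Finset V) :
    (#(G.interedges s s) : 𝕜) / (#s * (#s - 1)) =
      {e ∈ G.edgeSet | ∀ v ∈ e, v ∈ s}.ncard / (#s).choose 2 := by
  rw [card_interedges_self, Nat.cast_choose_two, Nat.cast_mul, Nat.cast_two, div_div_eq_mul_div,
    mul_comm 2]

variable [DecidableEq V]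

theorem sum_card_interedges_sdiff (s : Finset V) (k : ℕ) :
    ∑ A ∈ s.powersetCard (k + 1), #(G.interedges A (s \ A)) =
      #(G.interedges s s) * (#s - 2).choose k := by
  have hseparated : ∀ A ∈ s.powersetCard (k + 1), G.interedges A (s \ A) =
      (G.interedges s s).bipartiteAbove (fun A q ↦ q.1 ∈ A ∧ q.2 ∉ A) A := by
    intro A hA
    have hAs := (mem_powersetCard.1 hA).1
    ext q
    have hmem := @hAs q.1
    simp only [SimpleGraph.mem_interedges_iff, mem_sdiff, mem_bipartiteAbove]
    tauto
  calc
    _ = ∑ q ∈ G.interedges s s, #{A ∈ s.powersetCard (k + 1) | q.1 ∈ A ∧ q.2 ∉ A} := by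
      rw [sum_congr rfl fun A hA ↦ congrArg card (hseparated A hA)]
      exact sum_card_bipartiteAbove_eq_sum_card_bipartiteBelow _
    _ = ∑ _q ∈ G.interedges s s, (#s - 2).choose k := by
      refine sum_congr rfl fun q hq ↦ ?_
      obtain ⟨h₁, h₂, hadj⟩ := (G.mem_interedges_iff).1 hq
      exact card_filter_powersetCard_mem_notMem h₁ h₂ hadj.ne k
    _ = _ := by rw [sum_const, smul_eq_mul]

theorem expect_edgeDensity_sdiff (𝕜 : Type*) [Field 𝕜] [CharZero 𝕜] {s : Finset V} {k : ℕ}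
    (hk₀ : 0 < k) (hk : k < #s) :
    𝔼 A ∈ s.powersetCard k, (G.edgeDensity A (s \ A) : 𝕜) =
      #(G.interedges s s) / (#s * (#s - 1)) := by
  obtain ⟨k, rfl⟩ := Nat.exists_eq_add_one.2 hk₀
  obtain ⟨n, hn⟩ : ∃ n, #s = n + 2 := ⟨#s - 2, by omega⟩
  have hdensity : ∀ A ∈ s.powersetCard (k + 1), (G.edgeDensity A (s \ A) : 𝕜) =
      #(G.interedges A (s \ A)) / ((k + 1) * (n + 1 - k) : ℕ) := by
    intro A hA
    obtain ⟨hAs, hAk⟩ := mem_powersetCard.1 hA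
    rw [SimpleGraph.edgeDensity_def, card_sdiff_of_subset hAs, hAk, hn,
      show n + 2 - (k + 1) = n + 1 - k by omega]
    push_cast
    rfl
  have hchoose : (n.choose k : 𝕜) ≠ 0 :=
    Nat.cast_ne_zero.2 (Nat.choose_pos (by omega)).ne'
  calc
    _ = ((∑ A ∈ s.powersetCard (k + 1), #(G.interedges A (s \ A)) : ℕ) : 𝕜) /
        ((n + 2).choose (k + 1) * ((k + 1) * (n + 1 - k)) : ℕ) := by
      rw [expect_congr rfl hdensity, expect_eq_sum_div_card, ← sum_div, ← Nat.cast_sum,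
        card_powersetCard, hn, div_div, ← Nat.cast_mul, mul_comm (Nat.choose _ _)]
    _ = ((#(G.interedges s s) * n.choose k : ℕ) : 𝕜) / ((n + 2) * (n + 1) * n.choose k : ℕ) := by
      rw [sum_card_interedges_sdiff, choose_add_two_mul, hn, Nat.add_sub_cancel]
    _ = #(G.interedges s s) / (#s * (#s - 1)) := by
      rw [Nat.cast_mul, Nat.cast_mul, mul_div_mul_right _ _ hchoose, hn]
      push_cast
      ring

end

theorem IsPseudorandom.abs_edgeDensity_sub_le {V : Type*} [Fintype V] {G : SimpleGraph V}
    [DecidableRel G.Adj] {γ p : ℝ} (hG : IsPseudorandom G γ p) {s t : Finset V}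
    (hst : Disjoint s t) (hs : γ * Fintype.card V ≤ #s) (ht : γ * Fintype.card V ≤ #t) :
    |(G.edgeDensity s t : ℝ) - p| ≤ γ * p := by
  have h := hG s t (disjoint_coe.2 hst)
  simp only [Set.ncard_coe_finset, edgesBetween_coe] at h
  rw [SimpleGraph.edgeDensity_def]
  push_cast
  exact h hs ht

/-- If `G` is a `(γ,p)`-pseudorandom graph on `n ≥ 1` vertices, then every `U ⊆ V` with
`|U| ≥ 2⌈γn⌉` satisfies `| |E(U)| / C(|U|,2) − p | ≤ γp`, where `E(U)` is the set of
edges of `G` with both endpoints in `U`. Since `γn > 0`, such a `U` has at least two elements. -/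
theorem pseudorandom_internal_density
    {V : Type*} [Fintype V] [Nonempty V] (G : SimpleGraph V) (n : ℕ) (hn : Fintype.card V = n)
    (γ p : ℝ) (hγ0 : 0 < γ) (hγ1 : γ ≤ 1) (hp0 : 0 < p) (hp1 : p ≤ 1)
    (hG : IsPseudorandom G γ p)
    (U : Set V) (hU : 2 * ⌈γ * (n : ℝ)⌉₊ ≤ U.ncard) :
    |({e ∈ G.edgeSet | ∀ v ∈ e, v ∈ U}.ncard : ℝ) / (U.ncard.choose 2 : ℝ) - p|
      ≤ γ * p := by
  classical
  subst hn
  lift U to Finset V using U.toFinite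
  simp only [Set.ncard_coe_finset, mem_coe] at hU ⊢
  have hpos : 0 < ⌈γ * (Fintype.card V : ℝ)⌉₊ := Nat.ceil_pos.2 (by positivity)
  set k := ⌈γ * (Fintype.card V : ℝ)⌉₊
  rw [← card_interedges_self_div G ℝ, ← expect_edgeDensity_sdiff G ℝ hpos (by omega : k < #U)]
  refine abs_expect_sub_le (powersetCard_nonempty.2 (by omega)) fun A hA ↦ ?_
  obtain ⟨hAU, hAk⟩ := mem_powersetCard.1 hA
  have hle_sdiff : k ≤ #(U \ A) := by
    rw [card_sdiff_of_subset hAU]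
    omega
  exact hG.abs_edgeDensity_sub_le disjoint_sdiff (Nat.ceil_le.1 hAk.ge) (Nat.ceil_le.1 hle_sdiff)
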